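/- With tangential base points as in the paper (realized by restricting to the surface y_i = x_i^{β_i}), the iterated integral of ω₁(x₁,x₂) ∧ ω₀(x₃,x₄) over the region {0 < x₁ < x₃ < 1, 0 < x₂ < x₄ < 1} equals (β₂−β₁)²·ζ_{K;C}(2). In coordinates: the Lebesgue integral of the function (x₁,x₂,x₃,x₄) ↦ x₁^{β₁}·x₂^{β₂} / ((1 − x₁x₂)·(1 − x₁^{β₁}x₂^{β₂})·x₃·x₄) over the region {(x₁,x₂,x₃,x₄) ∈ ℝ⁴ : 0 < x₁ < x₃ < 1, 0 < x₂ < x₄ < 1} equals ζ_{K;C}(2) = ∑_{γ∈C} 1/N(γ)². -/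

import Mathlib

/-!
Expanding both geometric series, for `0 < x₁, x₂ < 1`,
`x₁^β₁ x₂^β₂ / ((1 - x₁x₂)(1 - x₁^β₁ x₂^β₂)) = ∑_{a,b ≥ 1} x₁^(a + bβ₁ - 1) x₂^(a + bβ₂ - 1)`
(`hasSum_cone`), so on the region the integrand is a sum over the cone of products of a
function of `(x₁, x₃)` and a function of `(x₂, x₄)`. By Tonelli each summand integrates to a
product of two integrals `∫∫_{0<x<z<1} x^(c-1) / z dx dz = 1 / c²` (`lintegral_iterKernel`).

Everything is nonnegative, so the argument runs in `ℝ≥0∞`, and neither integrability of the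
integrand nor convergence of the cone sum has to be established.
-/

open MeasureTheory Real

/-- First/second real embedding of the cone element γ = a + b·β (a, b positive
integers), with σⱼ(β) = β. -/
noncomputable def coneEmb (β : ℝ) (p : ℕ+ × ℕ+) : ℝ := (p.1 : ℝ) + (p.2 : ℝ) * β

open scoped ENNReal

/-- The integrand `x^(c-1) / z` of the two-fold iterated integral over `0 < x < z < 1`,
extended by zero. -/
noncomputable def iterKernel (c x z : ℝ) : ℝ≥0∞ :=
  if 0 < x ∧ x < z ∧ z < 1 then ENNReal.ofReal (x ^ (c - 1) / z) else 0

lemma measurable_iterKernel (c : ℝ) :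
    Measurable (fun p : ℝ × ℝ => iterKernel c p.1 p.2) := by
  unfold iterKernel
  refine Measurable.ite ?_ (by fun_prop) measurable_const
  refine (measurableSet_lt measurable_const measurable_fst).inter
    ((measurableSet_lt measurable_fst measurable_snd).inter
      (measurableSet_lt measurable_snd measurable_const))

lemma lintegral_Ioo_rpow {r : ℝ} (hr : -1 < r) {z : ℝ} (hz : 0 ≤ z) :
    ∫⁻ x in Set.Ioo 0 z, ENNReal.ofReal (x ^ r) = ENNReal.ofReal (z ^ (r + 1) / (r + 1)) := by
  have hi : IntervalIntegrable (fun x : ℝ => x ^ r) volume 0 z :=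
    intervalIntegral.intervalIntegrable_rpow' hr
  rw [intervalIntegrable_iff_integrableOn_Ioo_of_le hz] at hi
  rw [← ofReal_integral_eq_lintegral_ofReal hi, ← integral_Ioc_eq_integral_Ioo,
    ← intervalIntegral.integral_of_le hz, integral_rpow (Or.inl hr),
    Real.zero_rpow (by linarith), sub_zero]
  filter_upwards [ae_restrict_mem measurableSet_Ioo] with x hx
  exact Real.rpow_nonneg hx.1.le _

/-- The inner integral in `x`: it equals `z^(c-1) / c` for `z ∈ (0, 1)`. -/
lemma lintegral_iterKernel_left {c : ℝ} (hc : 0 < c) (z : ℝ) :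
    ∫⁻ x, iterKernel c x z =
      (Set.Ioo (0 : ℝ) 1).indicator (fun z => ENNReal.ofReal c⁻¹ * ENNReal.ofReal (z ^ (c - 1))) z := by
  by_cases hz : z ∈ Set.Ioo (0 : ℝ) 1
  · rw [Set.indicator_of_mem hz]
    have h1 : (fun x => iterKernel c x z) = (Set.Ioo (0 : ℝ) z).indicator
        (fun x => ENNReal.ofReal (x ^ (c - 1)) * ENNReal.ofReal z⁻¹) := by
      ext x
      by_cases hx : x ∈ Set.Ioo 0 z
      · rw [Set.indicator_of_mem hx, iterKernel, if_pos ⟨hx.1, hx.2, hz.2⟩, div_eq_mul_inv,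
          ENNReal.ofReal_mul (Real.rpow_nonneg hx.1.le _)]
      · rw [Set.indicator_of_notMem hx, iterKernel, if_neg fun h => hx ⟨h.1, h.2.1⟩]
    rw [h1, lintegral_indicator measurableSet_Ioo, lintegral_mul_const _ (by fun_prop),
      lintegral_Ioo_rpow (by linarith) hz.1.le, ← ENNReal.ofReal_mul (by have := hz.1; ring_nf; positivity),
      ← ENNReal.ofReal_mul (by positivity)]
    congr 1
    have := hz.1
    rw [Real.rpow_sub_one this.ne', sub_add_cancel]
    ring
  · rw [Set.indicator_of_notMem hz]
    have : ∀ x, iterKernel c x z = 0 := fun x =>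
      if_neg fun h => hz ⟨h.1.trans h.2.1, h.2.2⟩
    simp [this]

lemma lintegral_iterKernel {c : ℝ} (hc : 0 < c) :
    ∫⁻ x, ∫⁻ z, iterKernel c x z = ENNReal.ofReal (1 / c ^ 2) := by
  rw [lintegral_lintegral_swap (measurable_iterKernel c).aemeasurable]
  simp_rw [lintegral_iterKernel_left hc]
  rw [lintegral_indicator measurableSet_Ioo, lintegral_const_mul _ (by fun_prop),
    lintegral_Ioo_rpow (by linarith) zero_le_one, ← ENNReal.ofReal_mul (by positivity)]
  congr 1
  rw [Real.one_rpow, sub_add_cancel]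
  field_simp

lemma lintegral_iterKernel_mul {c d : ℝ} (hc : 0 < c) (hd : 0 < d) :
    ∫⁻ x : ℝ × ℝ × ℝ × ℝ, iterKernel c x.1 x.2.2.1 * iterKernel d x.2.1 x.2.2.2 =
      ENNReal.ofReal (1 / (c * d) ^ 2) := by
  have hm1 : ∀ e x, Measurable (iterKernel e x) := fun e x =>
    (measurable_iterKernel e).comp (measurable_const.prodMk measurable_id)
  have hm : Measurable (fun x : ℝ × ℝ × ℝ × ℝ =>
      iterKernel c x.1 x.2.2.1 * iterKernel d x.2.1 x.2.2.2) :=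
    ((measurable_iterKernel c).comp (by fun_prop : Measurable
        fun x : ℝ × ℝ × ℝ × ℝ => (x.1, x.2.2.1))).mul
      ((measurable_iterKernel d).comp (by fun_prop : Measurable
        fun x : ℝ × ℝ × ℝ × ℝ => (x.2.1, x.2.2.2)))
  have hI : ∀ e, Measurable fun x => ∫⁻ z, iterKernel e x z := fun e =>
    (measurable_iterKernel e).lintegral_prod_right'
  calc _ = ∫⁻ x₁, ∫⁻ x₂, ∫⁻ w : ℝ × ℝ, iterKernel c x₁ w.1 * iterKernel d x₂ w.2 := by
        rw [Measure.volume_eq_prod, lintegral_prod _ hm.aemeasurable]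
        congr 1; ext x₁
        rw [Measure.volume_eq_prod]
        exact lintegral_prod _ (hm.comp (measurable_prodMk_left (x := x₁))).aemeasurable
    _ = ∫⁻ x₁, ∫⁻ x₂, (∫⁻ z, iterKernel c x₁ z) * ∫⁻ z, iterKernel d x₂ z := by
        congr 1; ext x₁; congr 1; ext x₂
        rw [Measure.volume_eq_prod]
        exact lintegral_prod_mul (hm1 _ _).aemeasurable (hm1 _ _).aemeasurable
    _ = ENNReal.ofReal (1 / c ^ 2) * ENNReal.ofReal (1 / d ^ 2) := by
        simp_rw [lintegral_const_mul _ (hI d), lintegral_iterKernel hd]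
        rw [lintegral_mul_const _ (hI c), lintegral_iterKernel hc]
    _ = _ := by
        rw [← ENNReal.ofReal_mul (by positivity)]
        congr 1
        field_simp

lemma coneEmb_pos {β : ℝ} (hβ : 0 < β) (p : ℕ+ × ℕ+) : 0 < coneEmb β p := by
  have h1 : (0 : ℝ) < (p.1 : ℝ) := by exact_mod_cast p.1.pos
  have h2 : (0 : ℝ) < (p.2 : ℝ) := by exact_mod_cast p.2.pos
  unfold coneEmb
  positivity

lemma hasSum_pnat_geometric {r : ℝ} (h0 : 0 ≤ r) (h1 : r < 1) :
    HasSum (fun n : ℕ+ => r ^ ((n : ℕ) - 1)) (1 - r)⁻¹ := by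
  rw [← Equiv.pnatEquivNat.symm.hasSum_iff]
  convert hasSum_geometric_of_lt_one h0 h1 using 2
  simp [Equiv.pnatEquivNat]

lemma hasSum_cone {β₁ β₂ x y : ℝ} (hβ₁ : 0 < β₁) (hβ₂ : 0 < β₂)
    (hx : 0 < x) (hx1 : x < 1) (hy : 0 < y) (hy1 : y < 1) :
    HasSum (fun p : ℕ+ × ℕ+ => x ^ (coneEmb β₁ p - 1) * y ^ (coneEmb β₂ p - 1))
      (x ^ β₁ * y ^ β₂ / ((1 - x * y) * (1 - x ^ β₁ * y ^ β₂))) := by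
  have hq0 : 0 < x ^ β₁ * y ^ β₂ := by positivity
  have hq1 : x ^ β₁ * y ^ β₂ < 1 :=
    mul_lt_one_of_nonneg_of_lt_one_left (by positivity) (Real.rpow_lt_one hx.le hx1 hβ₁)
      (Real.rpow_lt_one hy.le hy1 hβ₂).le
  have hr0 : 0 < x * y := by positivity
  have hr1 : x * y < 1 := mul_lt_one_of_nonneg_of_lt_one_left hx.le hx1 hy1.le
  have ha := hasSum_pnat_geometric hr0.le hr1
  have hb := (hasSum_pnat_geometric hq0.le hq1).mul_left (x ^ β₁ * y ^ β₂)
  have hs := ha.mul hb (ha.summable.mul_of_nonneg hb.summable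
    (fun n => by positivity) (fun n => by positivity))
  have hv : x ^ β₁ * y ^ β₂ / ((1 - x * y) * (1 - x ^ β₁ * y ^ β₂)) =
      (1 - x * y)⁻¹ * (x ^ β₁ * y ^ β₂ * (1 - x ^ β₁ * y ^ β₂)⁻¹) := by
    rw [div_eq_mul_inv, mul_inv]
    ring
  rw [hv]
  refine hs.congr_fun ?_
  rintro ⟨a, b⟩
  have hb' : x ^ β₁ * y ^ β₂ * (x ^ β₁ * y ^ β₂) ^ ((b : ℕ) - 1) =
      (x ^ β₁ * y ^ β₂) ^ (b : ℕ) := by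
    rw [← pow_succ', Nat.sub_add_cancel b.pos]
  have key : ∀ t β : ℝ, 0 < t →
      t ^ (coneEmb β (a, b) - 1) = t ^ ((a : ℕ) - 1) * (t ^ β) ^ (b : ℕ) := by
    intro t β ht
    rw [← Real.rpow_natCast (t ^ β), ← Real.rpow_mul ht.le, ← Real.rpow_natCast t,
      ← Real.rpow_add ht, Nat.cast_sub a.pos]
    congr 1
    simp only [coneEmb]
    push_cast
    ring
  simp only [hb', key x β₁ hx, key y β₂ hy]
  rw [mul_pow, mul_pow]
  ring

/-- With the tangential base points realized by restricting to the surface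
y₁ = x₁^{β₁}, y₂ = x₂^{β₂}, the integral of ω₁(x₁,x₂)∧ω₀(x₃,x₄) over
{0 < x₁ < x₃ < 1, 0 < x₂ < x₄ < 1} equals (β₂−β₁)²·ζ_{K;C}(2); in coordinates
(the factor (β₂−β₁)² being divided out on both sides), the Lebesgue integral of
x₁^{β₁}x₂^{β₂}/((1−x₁x₂)(1−x₁^{β₁}x₂^{β₂})x₃x₄) over that region equals
ζ_{K;C}(2) = ∑_{γ∈C} 1/N(γ)². -/
theorem integral_omega_one_omega_zero_eq_dedekindZeta_two (β₁ β₂ : ℝ)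
    (hβ₁ : 1 < β₁) (hβ₂ : 0 < β₂) (hβ₂' : β₂ < 1) :
    (∫ x in {x : ℝ × ℝ × ℝ × ℝ |
        0 < x.1 ∧ x.1 < x.2.2.1 ∧ x.2.2.1 < 1 ∧
        0 < x.2.1 ∧ x.2.1 < x.2.2.2 ∧ x.2.2.2 < 1},
      x.1 ^ β₁ * x.2.1 ^ β₂ /
        ((1 - x.1 * x.2.1) * (1 - x.1 ^ β₁ * x.2.1 ^ β₂) * x.2.2.1 * x.2.2.2)) =
      ∑' p : ℕ+ × ℕ+, 1 / (coneEmb β₁ p * coneEmb β₂ p) ^ 2 := by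
  have hβ₁0 : 0 < β₁ := by linarith
  set S : Set (ℝ × ℝ × ℝ × ℝ) := {x | 0 < x.1 ∧ x.1 < x.2.2.1 ∧ x.2.2.1 < 1 ∧
        0 < x.2.1 ∧ x.2.1 < x.2.2.2 ∧ x.2.2.2 < 1} with hS
  have hSm : MeasurableSet S := by
    simp only [hS, measurableSet_setOfPred]
    refine Measurable.and ?_ (Measurable.and ?_ (Measurable.and ?_ (Measurable.and ?_
      (Measurable.and ?_ ?_)))) <;>
    exact measurableSet_setOfPred.1 (measurableSet_lt (by fun_prop) (by fun_prop))
  have hsum : ∀ x ∈ S, HasSum (fun p : ℕ+ × ℕ+ =>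
      (x.1 ^ (coneEmb β₁ p - 1) / x.2.2.1) * (x.2.1 ^ (coneEmb β₂ p - 1) / x.2.2.2))
      (x.1 ^ β₁ * x.2.1 ^ β₂ /
        ((1 - x.1 * x.2.1) * (1 - x.1 ^ β₁ * x.2.1 ^ β₂) * x.2.2.1 * x.2.2.2)) := by
    rintro x ⟨h1, h2, h3, h4, h5, h6⟩
    have hv : x.1 ^ β₁ * x.2.1 ^ β₂ /
        ((1 - x.1 * x.2.1) * (1 - x.1 ^ β₁ * x.2.1 ^ β₂) * x.2.2.1 * x.2.2.2) =
        x.1 ^ β₁ * x.2.1 ^ β₂ / ((1 - x.1 * x.2.1) * (1 - x.1 ^ β₁ * x.2.1 ^ β₂)) *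
          (x.2.2.1⁻¹ * x.2.2.2⁻¹) := by
      simp only [div_eq_mul_inv, mul_inv]; ring
    rw [hv]
    refine ((hasSum_cone hβ₁0 hβ₂ h1 (h2.trans h3) h4 (h5.trans h6)).mul_right _).congr_fun
      fun p => ?_
    ring
  have hnn : ∀ x ∈ S, ∀ p : ℕ+ × ℕ+,
      0 ≤ (x.1 ^ (coneEmb β₁ p - 1) / x.2.2.1) * (x.2.1 ^ (coneEmb β₂ p - 1) / x.2.2.2) := by
    rintro x ⟨h1, h2, h3, h4, h5, h6⟩ p
    have := h1.trans h2
    have := h4.trans h5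
    positivity
  rw [integral_eq_lintegral_of_nonneg_ae]
  rotate_left
  · filter_upwards [ae_restrict_mem hSm] with x hx
    exact (hsum x hx).nonneg (hnn x hx)
  · exact Measurable.aestronglyMeasurable (by fun_prop)
  have hL : ∫⁻ x in S, ENNReal.ofReal (x.1 ^ β₁ * x.2.1 ^ β₂ /
        ((1 - x.1 * x.2.1) * (1 - x.1 ^ β₁ * x.2.1 ^ β₂) * x.2.2.1 * x.2.2.2)) =
      ∑' p : ℕ+ × ℕ+, ENNReal.ofReal (1 / (coneEmb β₁ p * coneEmb β₂ p) ^ 2) := by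
    rw [← lintegral_indicator hSm]
    have hexp : ∀ x, S.indicator (fun x => ENNReal.ofReal (x.1 ^ β₁ * x.2.1 ^ β₂ /
        ((1 - x.1 * x.2.1) * (1 - x.1 ^ β₁ * x.2.1 ^ β₂) * x.2.2.1 * x.2.2.2))) x =
        ∑' p : ℕ+ × ℕ+, iterKernel (coneEmb β₁ p) x.1 x.2.2.1 *
          iterKernel (coneEmb β₂ p) x.2.1 x.2.2.2 := by
      intro x
      by_cases hx : x ∈ S
      · rw [Set.indicator_of_mem hx, ← (hsum x hx).tsum_eq,
          ENNReal.ofReal_tsum_of_nonneg (hnn x hx) (hsum x hx).summable]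
        obtain ⟨h1, h2, h3, h4, h5, h6⟩ := hx
        have := h1.trans h2
        refine tsum_congr fun p => ?_
        rw [ENNReal.ofReal_mul (by positivity), iterKernel, iterKernel, if_pos ⟨h1, h2, h3⟩,
          if_pos ⟨h4, h5, h6⟩]
      · rw [Set.indicator_of_notMem hx]
        symm
        rw [ENNReal.tsum_eq_zero]
        intro p
        rw [mul_eq_zero, iterKernel, iterKernel]
        by_contra! h
        simp only [ne_eq, ite_eq_right_iff, not_forall] at h
        obtain ⟨⟨⟨a, b, c⟩, -⟩, ⟨⟨d, e, f⟩, -⟩⟩ := h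
        exact hx ⟨a, b, c, d, e, f⟩
    simp_rw [hexp]
    rw [lintegral_tsum]
    · exact tsum_congr fun p =>
        lintegral_iterKernel_mul (coneEmb_pos hβ₁0 p) (coneEmb_pos hβ₂ p)
    · intro p
      exact (((measurable_iterKernel _).comp (by fun_prop : Measurable
          fun x : ℝ × ℝ × ℝ × ℝ => (x.1, x.2.2.1))).mul
        ((measurable_iterKernel _).comp (by fun_prop : Measurable
          fun x : ℝ × ℝ × ℝ × ℝ => (x.2.1, x.2.2.2)))).aemeasurable
  -- `toReal` commutes with the sum whether or not it is finite: both sides are `0` if it diverges.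
  rw [hL, ENNReal.tsum_toReal_eq fun p => ENNReal.ofReal_ne_top]
  exact tsum_congr fun p => ENNReal.toReal_ofReal (by positivity)
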